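/- With G₀(n) the group of a ∈ SL(v) acting trivially on the center (i.e., [au,av]=[u,v]) for n = n_{(c,r)} (single-block normal form) and n̂ its H-type counterpart obtained by replacing A(c,r) by its semisimple part normalized to c = i, one has G₀(n) ⊆ G₀(n̂), and consequently dim Aut(n) ≤ dim Aut(n̂). -/

import Mathlib

open Matrix

/-- The 2×2 real matrix representing a complex number `c`. -/
def Zmat (c : ℂ) : Matrix (Fin 2) (Fin 2) ℝ := !![c.re, c.im; -c.im, c.re]

/-- The `2r × 2r` real block-Jordan matrix `A(c,r)`: blocks `Z(c)` on the diagonal and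
`I₂` on the (block) subdiagonal. -/
def Amat (c : ℂ) (r : ℕ) : Matrix (Fin r × Fin 2) (Fin r × Fin 2) ℝ :=
  fun p q =>
    if p.1 = q.1 then Zmat c p.2 q.2
    else if (p.1 : ℕ) = (q.1 : ℕ) + 1 then (1 : Matrix (Fin 2) (Fin 2) ℝ) p.2 q.2
    else 0

/-- `Â(r)`: the block-diagonal matrix with all blocks `Z(i)`, giving the H-type
counterpart `n̂`. -/
def Ahat (r : ℕ) : Matrix (Fin r × Fin 2) (Fin r × Fin 2) ℝ :=
  fun p q => if p.1 = q.1 then Zmat Complex.I p.2 q.2 else 0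

/-- `[φ] = [[0, -I_{2r}],[I_{2r}, 0]]`, the matrix of the first bracket component. -/
def T1mat (r : ℕ) :
    Matrix ((Fin r × Fin 2) ⊕ (Fin r × Fin 2)) ((Fin r × Fin 2) ⊕ (Fin r × Fin 2)) ℝ :=
  Matrix.fromBlocks 0 (-1) 1 0

/-- `[ψ] = [[0, A],[-Aᵀ, 0]]`, the matrix of the second bracket component. -/
def T2mat {r : ℕ} (A : Matrix (Fin r × Fin 2) (Fin r × Fin 2) ℝ) :
    Matrix ((Fin r × Fin 2) ⊕ (Fin r × Fin 2)) ((Fin r × Fin 2) ⊕ (Fin r × Fin 2)) ℝ :=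
  Matrix.fromBlocks 0 A (-Aᵀ) 0

/-- The `ℝ²`-valued bracket `[u,v] = (φ(u,v), ψ(u,v))` on `v = ℝ^{4r}` determined by the
matrix `A`. -/
def brkt {r : ℕ} (A : Matrix (Fin r × Fin 2) (Fin r × Fin 2) ℝ)
    (u v : ((Fin r × Fin 2) ⊕ (Fin r × Fin 2)) → ℝ) : Fin 2 → ℝ :=
  ![u ⬝ᵥ (T1mat r).mulVec v, u ⬝ᵥ (T2mat A).mulVec v]

/-- `G₀`: the determinant-one linear maps of `v` preserving both component forms, i.e.
acting trivially on the center. -/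
def G0 {r : ℕ} (A : Matrix (Fin r × Fin 2) (Fin r × Fin 2) ℝ) :
    Set (Matrix ((Fin r × Fin 2) ⊕ (Fin r × Fin 2))
      ((Fin r × Fin 2) ⊕ (Fin r × Fin 2)) ℝ) :=
  {g | g.det = 1 ∧ gᵀ * T1mat r * g = T1mat r ∧ gᵀ * T2mat A * g = T2mat A}

/-- The bracket of `n = v ⊕ ℝ²` extended to all of `n` (the center is central). -/
def fullBrkt {r : ℕ} (A : Matrix (Fin r × Fin 2) (Fin r × Fin 2) ℝ)
    (u v : (((Fin r × Fin 2) ⊕ (Fin r × Fin 2)) ⊕ Fin 2) → ℝ) :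
    (((Fin r × Fin 2) ⊕ (Fin r × Fin 2)) ⊕ Fin 2) → ℝ :=
  Sum.elim 0 (brkt A (u ∘ Sum.inl) (v ∘ Sum.inl))

/-- The derivations of `n`, i.e. the Lie algebra of `Aut(n)`; `dim Aut(n)` is its
dimension. -/
def derivs {r : ℕ} (A : Matrix (Fin r × Fin 2) (Fin r × Fin 2) ℝ) :
    Set (Matrix ((((Fin r × Fin 2) ⊕ (Fin r × Fin 2)) ⊕ Fin 2))
      ((((Fin r × Fin 2) ⊕ (Fin r × Fin 2)) ⊕ Fin 2)) ℝ) :=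
  {X | ∀ u v, X.mulVec (fullBrkt A u v) =
    fullBrkt A (X.mulVec u) v + fullBrkt A u (X.mulVec v)}

open scoped Kronecker

lemma aux_nil {R : Type*} [Ring R] (E N X : R) (n : ℕ) (hN : N ^ n = 0)
    (hNX : Commute N X) (hE : E = N * E * X - E * N * X) : E = 0 := by
  have key : ∀ k i j : ℕ, 2 * n ≤ i + j + k → N ^ i * E * N ^ j = 0 := by
    intro k
    induction k with
    | zero =>
      intro i j h
      rcases le_total n i with h1 | h1
      · rw [pow_eq_zero_of_le h1 hN]; simp
      · have : n ≤ j := by omega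
        rw [pow_eq_zero_of_le this hN]; simp
    | succ k ih =>
      intro i j h
      have h1 := ih (i + 1) j (by omega)
      have h2 := ih i (j + 1) (by omega)
      have hX : X * N ^ j = N ^ j * X := (hNX.pow_left j).eq.symm
      rw [hE]
      have e1 : N ^ i * (N * E * X - E * N * X) * N ^ j
          = (N ^ (i + 1) * E * N ^ j) * X - (N ^ i * E * N ^ (j + 1)) * X := by
        rw [pow_succ N i, pow_succ' N j]
        simp only [mul_sub, sub_mul, mul_assoc, hX]
      rw [e1, h1, h2]; simp
  simpa using key (2 * n) 0 0 (by omega)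

lemma aux_comm {R : Type*} [Ring R] [Algebra ℝ R] (g J N : R) (n : ℕ) (a b : ℝ) (hb : b ≠ 0)
    (hJ : J * J = -1) (hJN : Commute J N) (hN : N ^ n = 0)
    (hg : Commute g (a • 1 + b • J + N)) : Commute g J := by
  have h1 : b • (g * J) + g * N = b • (J * g) + N * g := by
    have := hg.eq
    simp only [mul_add, add_mul, mul_smul_comm, smul_mul_assoc, mul_one, one_mul] at this
    rw [add_assoc, add_assoc] at this
    exact add_left_cancel this
  obtain ⟨E, hEdef⟩ : ∃ E, E = g * J - J * g := ⟨_, rfl⟩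
  have anti : J * E = -(E * J) := by
    rw [hEdef, mul_sub, sub_mul, mul_assoc g, hJ, ← mul_assoc J J, hJ, ← mul_assoc]
    simp
  have hbE : b • E = N * g - g * N := by
    rw [hEdef, smul_sub, sub_eq_sub_iff_add_eq_add, h1, add_comm]
  have hcomm : b • (E * J) + E * N = b • (J * E) + N * E := by
    have hK : Commute E (a • 1 + b • J + N) := by
      rw [hEdef]
      have hJK : Commute J (a • 1 + b • J + N) :=
        (((Commute.one_right J).smul_right a).add_right ((Commute.refl J).smul_right b)).add_right hJN
      exact (hg.mul_left hJK).sub_left (hJK.mul_left hg)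
    have := hK.eq
    simp only [mul_add, add_mul, mul_smul_comm, smul_mul_assoc, mul_one, one_mul] at this
    rw [add_assoc, add_assoc] at this
    exact add_left_cancel this
  have h2 : (2 * b) • (E * J) = N * E - E * N := by
    rw [anti] at hcomm
    rw [eq_sub_iff_add_eq, two_mul, add_smul, add_assoc, hcomm]
    simp
  have h3 : E = 0 := by
    apply aux_nil E N (-(2 * b)⁻¹ • J) n hN (hJN.symm.smul_right _)
    have h4 : (2 * b) • (E * J) * J = (N * E - E * N) * J := by rw [h2]
    rw [smul_mul_assoc, mul_assoc, hJ] at h4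
    rw [← sub_mul, mul_smul_comm, ← h4, smul_smul]
    have : -(2 * b)⁻¹ * (2 * b) = -1 := by field_simp
    rw [this]; simp
  rw [hEdef] at h3
  exact sub_eq_zero.mp h3

abbrev VV (r : ℕ) := (Fin r × Fin 2) ⊕ (Fin r × Fin 2)

def shiftM (r : ℕ) : Matrix (Fin r) (Fin r) ℝ := fun p q => if (p : ℕ) = (q : ℕ) + 1 then 1 else 0

lemma shiftM_pow (r k : ℕ) (p q : Fin r) (h : (p : ℕ) < (q : ℕ) + k) : (shiftM r ^ k) p q = 0 := by
  induction k generalizing p q with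
  | zero => simp [Matrix.one_apply]; intro h2; subst h2; omega
  | succ k ih =>
    rw [pow_succ, Matrix.mul_apply]
    apply Finset.sum_eq_zero
    intro j _
    by_cases hj : (j : ℕ) = (q : ℕ) + 1
    · rw [ih p j (by omega), zero_mul]
    · simp [shiftM, hj]

lemma shiftM_nil (r : ℕ) : shiftM r ^ r = 0 := by
  ext p q
  exact shiftM_pow r r p q (by omega)

def NN (r : ℕ) : Matrix (Fin r × Fin 2) (Fin r × Fin 2) ℝ := shiftM r ⊗ₖ 1

lemma Ahat_eq (r : ℕ) : Ahat r = (1 : Matrix (Fin r) (Fin r) ℝ) ⊗ₖ Zmat Complex.I := by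
  ext p q
  simp [Ahat, Matrix.kroneckerMap_apply, Matrix.one_apply]

lemma Amat_eq (c : ℂ) (r : ℕ) : Amat c r = c.re • 1 + c.im • Ahat r + NN r := by
  ext ⟨p, i⟩ ⟨q, j⟩
  by_cases h : p = q
  · subst h
    fin_cases i <;> fin_cases j <;>
      simp [Amat, Ahat, NN, shiftM, Matrix.kroneckerMap_apply, Matrix.one_apply, Zmat]
  · simp [Amat, Ahat, NN, shiftM, Matrix.kroneckerMap_apply, Matrix.one_apply, h]
    grind

lemma Zmat_sq : Zmat Complex.I * Zmat Complex.I = -1 := by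
  ext i j
  fin_cases i <;> fin_cases j <;> simp [Zmat, Matrix.mul_apply]

lemma Ahat_sq (r : ℕ) : Ahat r * Ahat r = -1 := by
  rw [Ahat_eq, ← Matrix.mul_kronecker_mul, Zmat_sq, one_mul]
  ext p q
  rcases p with ⟨p, i⟩
  rcases q with ⟨q, j⟩
  simp [Matrix.kroneckerMap_apply, Matrix.one_apply]
  grind

lemma Ahat_NN (r : ℕ) : Ahat r * NN r = NN r * Ahat r := by
  rw [Ahat_eq, NN, ← Matrix.mul_kronecker_mul, ← Matrix.mul_kronecker_mul]
  simp

lemma NN_pow (r k : ℕ) : NN r ^ k = (shiftM r ^ k) ⊗ₖ 1 := by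
  induction k with
  | zero => simp
  | succ k ih => rw [pow_succ, ih, NN, ← Matrix.mul_kronecker_mul, pow_succ, one_mul]

lemma NN_nil (r : ℕ) : NN r ^ r = 0 := by
  rw [NN_pow, shiftM_nil]; simp

def DD {r : ℕ} (A : Matrix (Fin r × Fin 2) (Fin r × Fin 2) ℝ) : Matrix (VV r) (VV r) ℝ :=
  Matrix.fromBlocks Aᵀ 0 0 A

lemma T2_eq {r : ℕ} (A : Matrix (Fin r × Fin 2) (Fin r × Fin 2) ℝ) :
    T2mat A = -(T1mat r * DD A) := by
  simp [T2mat, T1mat, DD, Matrix.fromBlocks_multiply, Matrix.fromBlocks_neg]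

lemma blocks_neg_one (r : ℕ) : Matrix.fromBlocks (-1) 0 0 (-1) = (-1 : Matrix (VV r) (VV r) ℝ) := by
  have h : (-1 : Matrix (VV r) (VV r) ℝ) = -(Matrix.fromBlocks 1 0 0 1) := by
    rw [Matrix.fromBlocks_one]
  rw [h, Matrix.fromBlocks_neg]; simp

lemma tr_blocks {r : ℕ} (A B C D : Matrix (Fin r × Fin 2) (Fin r × Fin 2) ℝ) :
    (Matrix.fromBlocks A B C D).trace = A.trace + D.trace := by
  simp [Matrix.trace, Fintype.sum_sum_type]

lemma T1_sq (r : ℕ) : T1mat r * T1mat r = -1 := by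
  simp [T1mat, Matrix.fromBlocks_multiply, blocks_neg_one]

lemma T1_cancel {r : ℕ} {X Y : Matrix (VV r) (VV r) ℝ} (h : T1mat r * X = T1mat r * Y) : X = Y := by
  have : T1mat r * (T1mat r * X) = T1mat r * (T1mat r * Y) := by rw [h]
  rw [← mul_assoc, ← mul_assoc, T1_sq] at this
  simpa using this

lemma DD_T1 {r : ℕ} (A : Matrix (Fin r × Fin 2) (Fin r × Fin 2) ℝ) :
    (DD A)ᵀ * T1mat r = T1mat r * DD A := by
  simp [T1mat, DD, Matrix.fromBlocks_multiply, Matrix.fromBlocks_transpose]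

lemma DD_sq (r : ℕ) : DD (Ahat r) * DD (Ahat r) = -1 := by
  simp [DD, Matrix.fromBlocks_multiply, ← Matrix.transpose_mul, Ahat_sq, blocks_neg_one]

lemma DD_comm (r : ℕ) : Commute (DD (Ahat r)) (DD (NN r)) := by
  simp [Commute, SemiconjBy, DD, Matrix.fromBlocks_multiply, ← Matrix.transpose_mul, Ahat_NN]

lemma DD_pow {r : ℕ} (A : Matrix (Fin r × Fin 2) (Fin r × Fin 2) ℝ) (k : ℕ) :
    DD A ^ k = DD (A ^ k) := by
  induction k with
  | zero => simp [DD]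
  | succ k ih =>
    rw [pow_succ, ih, pow_succ]
    simp only [DD, Matrix.fromBlocks_multiply, ← Matrix.transpose_mul, ← pow_succ, ← pow_succ']
    simp

lemma DD_nil (r : ℕ) : DD (NN r) ^ r = 0 := by
  rw [DD_pow, NN_nil]; simp [DD]

lemma DD_Amat (c : ℂ) (r : ℕ) :
    DD (Amat c r) = c.re • 1 + c.im • DD (Ahat r) + DD (NN r) := by
  rw [Amat_eq, ← Matrix.fromBlocks_one]
  simp only [DD, Matrix.fromBlocks_smul, Matrix.fromBlocks_add]
  simp

lemma comm_hat (c : ℂ) (hc : 0 < c.im) (r : ℕ) (g : Matrix (VV r) (VV r) ℝ)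
    (h : Commute g (DD (Amat c r))) : Commute g (DD (Ahat r)) := by
  rw [DD_Amat] at h
  exact aux_comm g _ _ r _ _ hc.ne' (DD_sq r) (DD_comm r) (DD_nil r) h

lemma tr_hat (r : ℕ) : (DD (Ahat r)).trace = 0 := by
  rw [DD, tr_blocks, Matrix.trace_transpose, Ahat_eq, Matrix.trace_kronecker]
  simp [Zmat, Matrix.trace_fin_two]

lemma tr_shift (r : ℕ) : (shiftM r).trace = 0 := by
  simp [Matrix.trace, shiftM]

lemma tr_NN (r : ℕ) : (DD (NN r)).trace = 0 := by
  rw [DD, tr_blocks, Matrix.trace_transpose, NN, Matrix.trace_kronecker]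
  simp [tr_shift]

lemma tr_NN_hat (r : ℕ) : (DD (NN r) * DD (Ahat r)).trace = 0 := by
  have : (NN r * Ahat r).trace = 0 := by
    rw [Ahat_eq, NN, ← Matrix.mul_kronecker_mul, Matrix.trace_kronecker]
    simp [tr_shift]
  simp [DD, Matrix.fromBlocks_multiply, tr_blocks, ← Matrix.transpose_mul, this,
    Ahat_NN]

lemma G0_part (c : ℂ) (hc : 0 < c.im) (r : ℕ) : G0 (Amat c r) ⊆ G0 (Ahat r) := by
  rintro g ⟨h0, h1, h2⟩
  refine ⟨h0, h1, ?_⟩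
  have hdet : IsUnit g.det := by rw [h0]; exact isUnit_one
  have hcom : Commute g (DD (Amat c r)) := by
    rw [T2_eq] at h2
    have h3 : gᵀ * T1mat r * (DD (Amat c r) * g) = gᵀ * T1mat r * (g * DD (Amat c r)) := by
      rw [← mul_assoc _ g, h1]
      simpa [mul_assoc] using h2
    have h4 : IsUnit (gᵀ * T1mat r) := by
      have : IsUnit (T1mat r) := IsUnit.of_mul_eq_one (-T1mat r) (by simp [T1_sq])
      exact ((Matrix.isUnit_iff_isUnit_det _).2 (by simpa using hdet)).mul this
    exact (h4.mul_left_cancel h3).symm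
  have h5 := (comm_hat c hc r g hcom).eq
  rw [T2_eq, mul_neg, neg_mul, mul_assoc, mul_assoc, ← h5, ← mul_assoc (T1mat r), ← mul_assoc gᵀ,
    ← mul_assoc gᵀ, h1]

lemma ext_form {r : ℕ} (X Y : Matrix (VV r) (VV r) ℝ)
    (h : ∀ u v, u ⬝ᵥ X *ᵥ v = u ⬝ᵥ Y *ᵥ v) : X = Y := by
  ext i j
  simpa using h (Pi.single i 1) (Pi.single j 1)

lemma derivs_blocks {r : ℕ} (A : Matrix (Fin r × Fin 2) (Fin r × Fin 2) ℝ)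
    (P : Matrix (VV r) (VV r) ℝ) (R : Matrix (Fin 2) (VV r) ℝ) (S : Matrix (Fin 2) (Fin 2) ℝ) :
    Matrix.fromBlocks P 0 R S ∈ derivs A ↔
      (Pᵀ * T1mat r + T1mat r * P = S 0 0 • T1mat r + S 0 1 • T2mat A) ∧
      (Pᵀ * T2mat A + T2mat A * P = S 1 0 • T1mat r + S 1 1 • T2mat A) := by
  have e : ∀ (T : Matrix (VV r) (VV r) ℝ) (u v : VV r → ℝ),
      u ⬝ᵥ (Pᵀ * T + T * P) *ᵥ v = (P *ᵥ u) ⬝ᵥ T *ᵥ v + u ⬝ᵥ T *ᵥ (P *ᵥ v) := by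
    intro T u v
    rw [Matrix.add_mulVec, dotProduct_add, Matrix.mulVec_mulVec, ← Matrix.mulVec_mulVec v Pᵀ T,
      Matrix.dotProduct_mulVec u Pᵀ, Matrix.vecMul_transpose]
  constructor
  · intro h
    have h' : ∀ u v : VV r → ℝ, S *ᵥ brkt A u v = brkt A (P *ᵥ u) v + brkt A u (P *ᵥ v) := by
      intro u v
      have := h (Sum.elim u 0) (Sum.elim v 0)
      funext i
      have := congrFun this (Sum.inr i)
      simpa [fullBrkt, Matrix.fromBlocks_mulVec] using this
    constructor
    · apply ext_form
      intro u v
      rw [e]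
      have := congrFun (h' u v) 0
      rw [Matrix.mulVec, dotProduct, Fin.sum_univ_two] at this
      simp only [Matrix.add_mulVec, Matrix.smul_mulVec, dotProduct_add, dotProduct_smul, smul_eq_mul]
      exact this.symm
    · apply ext_form
      intro u v
      rw [e]
      have := congrFun (h' u v) 1
      rw [Matrix.mulVec, dotProduct, Fin.sum_univ_two] at this
      simp only [Matrix.add_mulVec, Matrix.smul_mulVec, dotProduct_add, dotProduct_smul, smul_eq_mul]
      exact this.symm
  · rintro ⟨h1, h2⟩ u v
    have k1 := e (T1mat r) (u ∘ Sum.inl) (v ∘ Sum.inl)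
    have k2 := e (T2mat A) (u ∘ Sum.inl) (v ∘ Sum.inl)
    rw [h1] at k1
    rw [h2] at k2
    simp only [Matrix.add_mulVec, Matrix.smul_mulVec, dotProduct_add, dotProduct_smul,
      smul_eq_mul] at k1 k2
    funext x
    rcases x with x | x
    · simp [fullBrkt, Matrix.fromBlocks_mulVec]
    · have a1 : ∀ w : (VV r ⊕ Fin 2) → ℝ,
          (Matrix.fromBlocks P 0 R S *ᵥ w) ∘ Sum.inl = P *ᵥ (w ∘ Sum.inl) := by
        intro w; funext i; simp [Matrix.fromBlocks_mulVec]
      simp only [fullBrkt, a1, Pi.add_apply, Sum.elim_inr]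
      rw [Matrix.fromBlocks_mulVec]
      simp only [Sum.elim_inr, Sum.elim_comp_inl, Sum.elim_comp_inr, Matrix.mulVec_zero,
        Pi.add_apply, Pi.zero_apply, zero_add]
      fin_cases x
      · simpa [brkt, Matrix.mulVec, dotProduct, Fin.sum_univ_two] using k1
      · simpa [brkt, Matrix.mulVec, dotProduct, Fin.sum_univ_two] using k2

lemma derivs_Q (c : ℂ) (hc : 0 < c.im) (r : ℕ) (hr : 0 < r)
    (X : Matrix (VV r ⊕ Fin 2) (VV r ⊕ Fin 2) ℝ) (hX : X ∈ derivs (Amat c r)) :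
    X.toBlocks₁₂ = 0 := by
  have h : ∀ u v : VV r → ℝ, X.toBlocks₁₂ *ᵥ brkt (Amat c r) u v = 0 := by
    intro u v
    have := hX (Sum.elim u 0) (Sum.elim v 0)
    funext i
    have := congrFun this (Sum.inl i)
    rw [← Matrix.fromBlocks_toBlocks X] at this
    simpa [fullBrkt, Matrix.fromBlocks_mulVec] using this
  let z : Fin r := ⟨0, hr⟩
  have h1 := h (Pi.single (Sum.inl (z, 0)) 1) (Pi.single (Sum.inr (z, 1)) 1)
  have h2 := h (Pi.single (Sum.inl (z, 0)) 1) (Pi.single (Sum.inr (z, 0)) 1)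
  have b1 : brkt (Amat c r) (Pi.single (Sum.inl (z, 0)) 1) (Pi.single (Sum.inr (z, 1)) 1)
      = ![0, c.im] := by
    simp [brkt, T1mat, T2mat, Amat, Zmat]
  have b2 : brkt (Amat c r) (Pi.single (Sum.inl (z, 0)) 1) (Pi.single (Sum.inr (z, 0)) 1)
      = ![-1, c.re] := by
    simp [brkt, T1mat, T2mat, Amat, Zmat]
  rw [b1] at h1
  rw [b2] at h2
  ext i j
  have h1i := congrFun h1 i
  have h2i := congrFun h2 i
  simp [Matrix.mulVec, dotProduct, Fin.sum_univ_two, hc.ne'] at h1i h2i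
  rw [h1i] at h2i
  fin_cases j
  · simpa using h2i
  · simpa using h1i

def FF (r : ℕ) : Matrix (VV r ⊕ Fin 2) (VV r ⊕ Fin 2) ℝ →ₗ[ℝ]
    (Matrix (Fin 2) (VV r) ℝ × ℝ × ℝ) where
  toFun X := (X.toBlocks₂₁, X (Sum.inr 0) (Sum.inr 0), X (Sum.inr 0) (Sum.inr 1))
  map_add' X Y := by ext <;> simp [Matrix.toBlocks₂₁]
  map_smul' a X := by ext <;> simp [Matrix.toBlocks₂₁]

lemma ker_part (c : ℂ) (hc : 0 < c.im) (r : ℕ) (hr : 0 < r)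
    (X : Matrix (VV r ⊕ Fin 2) (VV r ⊕ Fin 2) ℝ) (hX : X ∈ derivs (Amat c r))
    (hF : FF r X = 0) : X ∈ derivs (Ahat r) := by
  have hQ := derivs_Q c hc r hr X hX
  obtain ⟨P, hP⟩ : ∃ P, P = X.toBlocks₁₁ := ⟨_, rfl⟩
  obtain ⟨S, hS⟩ : ∃ S, S = X.toBlocks₂₂ := ⟨_, rfl⟩
  have hXe : X = Matrix.fromBlocks P 0 X.toBlocks₂₁ S := by
    rw [hP, hS, ← hQ, Matrix.fromBlocks_toBlocks]
  simp only [FF, LinearMap.coe_mk, AddHom.coe_mk, Prod.mk_eq_zero] at hF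
  obtain ⟨hR, s00, s01⟩ := hF
  have s00 : S 0 0 = 0 := by rw [hS]; exact s00
  have s01 : S 0 1 = 0 := by rw [hS]; exact s01
  rw [hXe, derivs_blocks] at hX
  obtain ⟨h1, h2⟩ := hX
  rw [s00, s01] at h1
  have h1' : Pᵀ * T1mat r = -(T1mat r * P) := by
    rw [eq_neg_iff_add_eq_zero, h1]; simp
  -- commutator identity
  have h3 : P * DD (Amat c r) - DD (Amat c r) * P = S 1 0 • 1 - S 1 1 • DD (Amat c r) := by
    apply T1_cancel
    rw [T2_eq, mul_neg, ← mul_assoc, h1'] at h2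
    simp only [mul_sub, mul_smul_comm, mul_one]
    simp only [neg_mul, neg_neg, smul_neg, mul_assoc] at h2
    rw [sub_eq_add_neg, sub_eq_add_neg]
    exact h2
  have hJ : Commute (DD (Amat c r)) (DD (Ahat r)) := comm_hat c hc r _ (Commute.refl _)
  have t1 : (P * DD (Amat c r) - DD (Amat c r) * P).trace = 0 := by
    rw [Matrix.trace_sub, Matrix.trace_mul_comm, sub_self]
  have t2 : ((P * DD (Amat c r) - DD (Amat c r) * P) * DD (Ahat r)).trace = 0 := by
    rw [sub_mul, Matrix.trace_sub, mul_assoc, hJ.eq, mul_assoc,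
      Matrix.trace_mul_comm (DD (Amat c r)), mul_assoc, sub_self]
  rw [h3, DD_Amat] at t1 t2
  have hr' : (r : ℝ) ≠ 0 := by exact_mod_cast hr.ne'
  have hcard : (Fintype.card (VV r) : ℝ) ≠ 0 := by
    simp [VV]; grind
  simp only [sub_mul, add_mul, smul_mul_assoc, one_mul, DD_sq, Matrix.trace_sub, Matrix.trace_add,
    Matrix.trace_smul, Matrix.trace_neg, Matrix.trace_one, tr_hat, tr_NN, tr_NN_hat, smul_eq_mul]
    at t1 t2
  have s11 : S 1 1 = 0 := by
    have : S 1 1 * (c.im * (Fintype.card (VV r) : ℝ)) = 0 := by linarith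
    rcases mul_eq_zero.1 this with h | h
    · exact h
    · exact absurd h (mul_ne_zero hc.ne' hcard)
  have s10 : S 1 0 = 0 := by
    rw [s11] at t1
    have : S 1 0 * (Fintype.card (VV r) : ℝ) = 0 := by linarith
    exact (mul_eq_zero.1 this).resolve_right hcard
  rw [s10, s11] at h3
  have hcom : Commute P (DD (Amat c r)) := by
    apply sub_eq_zero.1
    rw [h3]; simp
  have h5 := (comm_hat c hc r P hcom).eq
  rw [hXe, derivs_blocks, s00, s01, s10, s11]
  refine ⟨by rw [h1]; simp, ?_⟩
  rw [T2_eq, mul_neg, ← mul_assoc, h1', neg_mul, mul_assoc, h5, neg_mul, mul_assoc]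
  simp

lemma surj_part (r : ℕ) (y : Matrix (Fin 2) (VV r) ℝ × ℝ × ℝ) :
    ∃ X ∈ derivs (Ahat r), FF r X = y := by
  obtain ⟨R, s, t⟩ := y
  refine ⟨Matrix.fromBlocks ((s / 2) • 1 - (t / 2) • DD (Ahat r)) 0 R !![s, t; -t, s], ?_, ?_⟩
  · rw [derivs_blocks, T2_eq]
    have k1 := DD_T1 (Ahat r)
    have k2 := DD_sq r
    have k3 : (DD (Ahat r))ᵀ * (T1mat r * DD (Ahat r)) = - T1mat r := by
      rw [← mul_assoc, k1, mul_assoc, k2]; simp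
    have k4 : T1mat r * DD (Ahat r) * DD (Ahat r) = - T1mat r := by
      rw [mul_assoc, k2]; simp
    constructor
    · simp [sub_mul, mul_sub, k1]
      module
    · simp [sub_mul, mul_sub, k3, k4]
      module
  · simp [FF]

lemma dim_part {E F : Type*} [AddCommGroup E] [Module ℝ E] [FiniteDimensional ℝ E]
    [AddCommGroup F] [Module ℝ F] [FiniteDimensional ℝ F] (f : E →ₗ[ℝ] F) (W W' : Submodule ℝ E)
    (hk : ∀ x ∈ W, f x = 0 → x ∈ W') (hs : ∀ y, ∃ x ∈ W', f x = y) :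
    Module.finrank ℝ W ≤ Module.finrank ℝ W' := by
  have r1 := (f.domRestrict W).finrank_range_add_finrank_ker
  have r2 := (f.domRestrict W').finrank_range_add_finrank_ker
  have h1 : LinearMap.range (f.domRestrict W') = ⊤ := by
    rw [LinearMap.range_eq_top]
    intro y
    obtain ⟨x, hx, rfl⟩ := hs y
    exact ⟨⟨x, hx⟩, rfl⟩
  rw [h1, finrank_top] at r2
  have h2 := (LinearMap.range (f.domRestrict W)).finrank_le
  have h3 : Module.finrank ℝ (LinearMap.ker (f.domRestrict W)) ≤
      Module.finrank ℝ (LinearMap.ker (f.domRestrict W')) := by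
    let g : LinearMap.ker (f.domRestrict W) →ₗ[ℝ] LinearMap.ker (f.domRestrict W') :=
      { toFun := fun x => ⟨⟨x.1.1, hk _ x.1.2 x.2⟩, x.2⟩
        map_add' := fun _ _ => rfl
        map_smul' := fun _ _ => rfl }
    apply LinearMap.finrank_le_finrank_of_injective (f := g)
    intro x y hxy
    have : x.1.1 = y.1.1 := congrArg (fun z => z.1.1) hxy
    exact Subtype.ext (Subtype.ext this)
  omega

/-- For the single-block normal form `n = n_{(c,r)}` (with `c` in the upper
half plane) and its H-type counterpart `n̂`, one has `G₀(n) ⊆ G₀(n̂)`, and consequently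
`dim Aut(n) ≤ dim Aut(n̂)`. -/
theorem stmt15 (c : ℂ) (hc : 0 < c.im) (r : ℕ) (hr : 0 < r) :
    G0 (Amat c r) ⊆ G0 (Ahat r) ∧
    ∀ (W What : Submodule ℝ (Matrix ((((Fin r × Fin 2) ⊕ (Fin r × Fin 2)) ⊕ Fin 2))
        ((((Fin r × Fin 2) ⊕ (Fin r × Fin 2)) ⊕ Fin 2)) ℝ)),
      (W : Set _) = derivs (Amat c r) → (What : Set _) = derivs (Ahat r) →
      Module.finrank ℝ W ≤ Module.finrank ℝ What := by
  refine ⟨G0_part c hc r, ?_⟩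
  intro W What hW hWhat
  apply dim_part (FF r)
  · intro x hx hf
    have hx' : x ∈ derivs (Amat c r) := by rw [← hW]; exact hx
    have := ker_part c hc r hr x hx' hf
    rw [← hWhat] at this
    exact this
  · intro y
    obtain ⟨X, hX, h⟩ := surj_part r y
    rw [← hWhat] at hX
    exact ⟨X, hX, h⟩
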